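/- (Count of maximal ST-pairs of M_{n,n}) Let n ≥ 3. The number of maximal ST-pairs of M_{n,n} is exactly n² + 8n − 6; moreover these are divided among the five types as follows: 4n − 1 pairs of type T-chain, 2n − 2 of type S-link, n² − 2n + 1 of type S-2-links, 2n − 2 of type S-level, and 2n − 2 of type S-level-minus-link. -/

import Mathlib

/-- The underlying set of the lattice `M_{n,n}`: a bottom element `0`, a top
element `1`, and two levels `a₁, …, aₙ` and `b₁, …, bₙ`.  Here `a i` (for
`i : Fin n`) stands for `a_{i+1}` and `b j` for `b_{j+1}`, so the link elements
are `aₙ = a ⟨n-1, _⟩` and `b₁ = b ⟨0, _⟩`. -/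
inductive Mnn (n : ℕ) : Type where
  | bot : Mnn n
  | top : Mnn n
  | a : Fin n → Mnn n
  | b : Fin n → Mnn n
deriving DecidableEq

namespace Mnn

/-- The order of `M_{n,n}`: `0` is least, `1` is greatest, `aᵢ ≤ b₁` for every
`i`, `aₙ ≤ bⱼ` for every `j`, and there are no other comparabilities besides
those forced by reflexivity. -/
def le {n : ℕ} : Mnn n → Mnn n → Prop
  | .bot, _ => True
  | .top, .top => True
  | .top, .bot => False
  | .top, .a _ => False
  | .top, .b _ => False
  | .a _, .top => True
  | .a _, .bot => False
  | .a i, .a j => i = j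
  | .a i, .b j => (j : ℕ) = 0 ∨ (i : ℕ) = n - 1
  | .b _, .top => True
  | .b _, .bot => False
  | .b _, .a _ => False
  | .b i, .b j => i = j

/-- The join operation of `M_{n,n}`. -/
def sup {n : ℕ} : Mnn n → Mnn n → Mnn n
  | .bot, x => x
  | .top, _ => .top
  | .a i, .bot => .a i
  | .a _, .top => .top
  | .a i, .a j => if i = j then .a i else .b ⟨0, Nat.lt_of_le_of_lt (Nat.zero_le _) i.isLt⟩
  | .a i, .b j => if (j : ℕ) = 0 ∨ (i : ℕ) = n - 1 then .b j else .top
  | .b i, .bot => .b i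
  | .b _, .top => .top
  | .b i, .a j => if (i : ℕ) = 0 ∨ (j : ℕ) = n - 1 then .b i else .top
  | .b i, .b j => if i = j then .b i else .top

/-- The meet operation of `M_{n,n}`. -/
def inf {n : ℕ} : Mnn n → Mnn n → Mnn n
  | .bot, _ => .bot
  | .top, x => x
  | .a _, .bot => .bot
  | .a i, .top => .a i
  | .a i, .a j => if i = j then .a i else .bot
  | .a i, .b j => if (j : ℕ) = 0 ∨ (i : ℕ) = n - 1 then .a i else .bot
  | .b _, .bot => .bot
  | .b i, .top => .b i
  | .b i, .a j => if (i : ℕ) = 0 ∨ (j : ℕ) = n - 1 then .a j else .bot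
  | .b i, .b j => if i = j then .b i
      else .a ⟨n - 1, Nat.sub_lt (Nat.lt_of_le_of_lt (Nat.zero_le _) i.isLt) Nat.one_pos⟩

theorem le_refl' {n : ℕ} (x : Mnn n) : le x x := by cases x <;> simp [le]

theorem le_trans' {n : ℕ} (x y z : Mnn n) (hxy : le x y) (hyz : le y z) : le x z := by
  cases x <;> cases y <;> cases z <;> simp_all [le] <;> omega

theorem le_antisymm' {n : ℕ} (x y : Mnn n) (hxy : le x y) (hyx : le y x) : x = y := by
  cases x <;> cases y <;> simp_all [le]

theorem le_sup_left' {n : ℕ} (x y : Mnn n) : le x (sup x y) := by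
  cases x <;> cases y <;> dsimp only [sup] <;> (try split_ifs) <;> simp_all [le]

theorem le_sup_right' {n : ℕ} (x y : Mnn n) : le y (sup x y) := by
  cases x <;> cases y <;> dsimp only [sup] <;> (try split_ifs) <;> simp_all [le]

theorem sup_le' {n : ℕ} (x y z : Mnn n) (hxz : le x z) (hyz : le y z) :
    le (sup x y) z := by
  cases x <;> cases y <;> cases z <;> dsimp only [sup] <;> (try split_ifs) <;>
    simp_all [le, Fin.ext_iff] <;> omega

theorem inf_le_left' {n : ℕ} (x y : Mnn n) : le (inf x y) x := by
  cases x <;> cases y <;> dsimp only [inf] <;> (try split_ifs) <;> simp_all [le]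

theorem inf_le_right' {n : ℕ} (x y : Mnn n) : le (inf x y) y := by
  cases x <;> cases y <;> dsimp only [inf] <;> (try split_ifs) <;> simp_all [le]

theorem le_inf' {n : ℕ} (x y z : Mnn n) (hxy : le x y) (hxz : le x z) :
    le x (inf y z) := by
  cases x <;> cases y <;> cases z <;> dsimp only [inf] <;> (try split_ifs) <;>
    simp_all [le, Fin.ext_iff] <;> omega

/-- `M_{n,n}` is a lattice. -/
instance instLattice (n : ℕ) : Lattice (Mnn n) where
  le := le
  sup := sup
  inf := inf
  le_refl := le_refl'
  le_trans := le_trans'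
  le_antisymm := le_antisymm'
  le_sup_left := le_sup_left'
  le_sup_right := le_sup_right'
  sup_le := sup_le'
  inf_le_left := inf_le_left'
  inf_le_right := inf_le_right'
  le_inf := le_inf'

/-- `M_{n,n}* = M_{n,n} ∖ {0, 1}`, the set of non-identity elements. -/
def star (n : ℕ) : Set (Mnn n) := {x | x ≠ .bot ∧ x ≠ .top}

/-- The level `{a₁, …, aₙ}` of `M_{n,n}`. -/
def aLevel (n : ℕ) : Set (Mnn n) := Set.range Mnn.a

/-- The level `{b₁, …, bₙ}` of `M_{n,n}`. -/
def bLevel (n : ℕ) : Set (Mnn n) := Set.range Mnn.b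

/-- The link element `aₙ` of the level `{a₁, …, aₙ}`. -/
def aLink (n : ℕ) (h : 0 < n) : Mnn n := .a ⟨n - 1, Nat.sub_lt h Nat.one_pos⟩

/-- The link element `b₁` of the level `{b₁, …, bₙ}`. -/
def bLink (n : ℕ) (h : 0 < n) : Mnn n := .b ⟨0, h⟩

end Mnn

/-- `L` is `ST`-meet distributive. -/
def IsSTMeetDistrib {α : Type*} [Lattice α] (S T : Set α) : Prop :=
  ∀ s ∈ S, ∀ t₁ ∈ T, ∀ t₂ ∈ T, s ⊓ (t₁ ⊔ t₂) = (s ⊓ t₁) ⊔ (s ⊓ t₂)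

/-- `L` is `ST`-join distributive. -/
def IsSTJoinDistrib {α : Type*} [Lattice α] (S T : Set α) : Prop :=
  ∀ s ∈ S, ∀ t₁ ∈ T, ∀ t₂ ∈ T, s ⊔ (t₁ ⊓ t₂) = (s ⊔ t₁) ⊓ (s ⊔ t₂)

/-- `L` is `ST`-distributive. -/
def IsSTDistrib {α : Type*} [Lattice α] (S T : Set α) : Prop :=
  IsSTMeetDistrib S T ∧ IsSTJoinDistrib S T

/-- `(S, T)` is a maximal `ST`-pair of `M_{n,n}` (subject to the conditions of
the search problem: `S, T ⊆ M_{n,n}*`, `S ∩ T = ∅`, `S ≠ ∅`, `T ≠ ∅`). -/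
def MaximalSTPair (n : ℕ) (S T : Set (Mnn n)) : Prop :=
  S ⊆ Mnn.star n ∧ T ⊆ Mnn.star n ∧ S ∩ T = ∅ ∧ S.Nonempty ∧ T.Nonempty ∧
  IsSTDistrib S T ∧
  (¬ ∃ S' : Set (Mnn n), S ⊂ S' ∧ S' ⊆ Mnn.star n ∧ S' ∩ T = ∅ ∧ IsSTDistrib S' T) ∧
  (¬ ∃ T' : Set (Mnn n), T ⊂ T' ∧ T' ⊆ Mnn.star n ∧ S ∩ T' = ∅ ∧ IsSTDistrib S T')

/-- Type 1 (T-chain): `T` is a chain contained in `M_{n,n}*` — explicitly one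
of `{aᵢ}`, `{bᵢ}`, `{aᵢ, b₁}`, `{aₙ, bᵢ}` — and `S = M_{n,n}* ∖ T`. -/
def TypeTChain (n : ℕ) (h : 0 < n) (S T : Set (Mnn n)) : Prop :=
  IsChain (· ≤ ·) T ∧ S = Mnn.star n \ T ∧
  ∃ i : Fin n, T = {Mnn.a i} ∨ T = {Mnn.b i} ∨
    T = {Mnn.a i, Mnn.bLink n h} ∨ T = {Mnn.aLink n h, Mnn.b i}

/-- Type 2 (S-link): `S = {b₁}` and `T = {a₁, …, aₙ, bᵢ}` with `i ≠ 1`, or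
`S = {aₙ}` and `T = {aᵢ, b₁, …, bₙ}` with `i ≠ n`. -/
def TypeSLink (n : ℕ) (h : 0 < n) (S T : Set (Mnn n)) : Prop :=
  (∃ i : Fin n, Mnn.b i ≠ Mnn.bLink n h ∧ S = {Mnn.bLink n h} ∧
    T = Mnn.aLevel n ∪ {Mnn.b i}) ∨
  (∃ i : Fin n, Mnn.a i ≠ Mnn.aLink n h ∧ S = {Mnn.aLink n h} ∧
    T = {Mnn.a i} ∪ Mnn.bLevel n)

/-- Type 3 (S-2-links): `S = {aₙ, b₁}` and `T = {aᵢ, bⱼ}` with `i ≠ n`,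
`j ≠ 1`. -/
def TypeS2Links (n : ℕ) (h : 0 < n) (S T : Set (Mnn n)) : Prop :=
  ∃ i j : Fin n, Mnn.a i ≠ Mnn.aLink n h ∧ Mnn.b j ≠ Mnn.bLink n h ∧
    S = {Mnn.aLink n h, Mnn.bLink n h} ∧ T = {Mnn.a i, Mnn.b j}

/-- Type 4 (S-level): `S = {b₁, …, bₙ}` and `T = {aᵢ, aₙ}` with `i ≠ n`, or
`S = {a₁, …, aₙ}` and `T = {b₁, bᵢ}` with `i ≠ 1`. -/
def TypeSLevel (n : ℕ) (h : 0 < n) (S T : Set (Mnn n)) : Prop :=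
  (∃ i : Fin n, Mnn.a i ≠ Mnn.aLink n h ∧ S = Mnn.bLevel n ∧
    T = {Mnn.a i, Mnn.aLink n h}) ∨
  (∃ i : Fin n, Mnn.b i ≠ Mnn.bLink n h ∧ S = Mnn.aLevel n ∧
    T = {Mnn.bLink n h, Mnn.b i})

/-- Type 5 (S-level-minus-link): `S = {b₂, …, bₙ}` and `T = {aᵢ, aₙ, b₁}` with
`i ≠ n`, or `S = {a₁, …, a_{n-1}}` and `T = {aₙ, b₁, bᵢ}` with `i ≠ 1`. -/
def TypeSLevelMinusLink (n : ℕ) (h : 0 < n) (S T : Set (Mnn n)) : Prop :=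
  (∃ i : Fin n, Mnn.a i ≠ Mnn.aLink n h ∧ S = Mnn.bLevel n \ {Mnn.bLink n h} ∧
    T = {Mnn.a i, Mnn.aLink n h, Mnn.bLink n h}) ∨
  (∃ i : Fin n, Mnn.b i ≠ Mnn.bLink n h ∧ S = Mnn.aLevel n \ {Mnn.aLink n h} ∧
    T = {Mnn.aLink n h, Mnn.bLink n h, Mnn.b i})

/-!
`M_{n,n}` is modular, and in a modular lattice both distributive laws hold for `s, t₁, t₂` as soon
as two of the three are comparable; in `M_{n,n}` they fail whenever the three are pairwise
incomparable. So `M_{n,n}` is `ST`-distributive iff no `s ∈ S` and `t₁, t₂ ∈ T` form an antichain,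
and maximality means that every element of `M_{n,n}*` outside `S ∪ T` would create such an antichain
on either side. Two distinct elements of `M_{n,n}*` are incomparable iff they are on one level or
neither is a link, and the classification splits on `T`: it is a chain; it is not a chain but has at
most one element on each level; or it has two elements on one level, one of them not a link.
-/

local infix:50 " ∥ " => IncompRel (· ≤ ·)

/-- The element `s` satisfies both distributive laws with respect to `t₁` and `t₂`. -/
def DistributesOver {α : Type*} [Lattice α] (s t₁ t₂ : α) : Prop :=
  s ⊓ (t₁ ⊔ t₂) = s ⊓ t₁ ⊔ s ⊓ t₂ ∧ s ⊔ t₁ ⊓ t₂ = (s ⊔ t₁) ⊓ (s ⊔ t₂)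

/-- Three-element antichains, as pairwise incomparable triples. -/
def IncompTriple {α : Type*} [LE α] (x y z : α) : Prop :=
  x ∥ y ∧ x ∥ z ∧ y ∥ z

theorem IncompTriple.swap {α : Type*} [LE α] {x y z : α} (h : IncompTriple x y z) :
    IncompTriple x z y :=
  ⟨h.2.1, h.1, h.2.2.symm⟩

theorem isSTDistrib_iff {α : Type*} [Lattice α] {S T : Set α} :
    IsSTDistrib S T ↔ ∀ s ∈ S, ∀ t₁ ∈ T, ∀ t₂ ∈ T, DistributesOver s t₁ t₂ := by
  simp only [IsSTDistrib, IsSTMeetDistrib, IsSTJoinDistrib, DistributesOver, forall_and]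

section Lattice

variable {α : Type*} [Lattice α] {s t₁ t₂ : α}

theorem distributesOver_swap : DistributesOver s t₁ t₂ ↔ DistributesOver s t₂ t₁ := by
  simp only [DistributesOver, sup_comm, inf_comm]

theorem DistributesOver.of_le_right (h : t₁ ≤ t₂) : DistributesOver s t₁ t₂ :=
  ⟨by rw [sup_eq_right.2 h, sup_eq_right.2 (inf_le_inf_left s h)],
    by rw [inf_eq_left.2 h, inf_eq_left.2 (sup_le_sup_left h s)]⟩

variable [IsModularLattice α]

theorem DistributesOver.of_le_left (h : s ≤ t₁) : DistributesOver s t₁ t₂ :=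
  ⟨by rw [inf_eq_left.2 (h.trans le_sup_left), inf_eq_left.2 h, sup_inf_self],
    by rw [sup_eq_right.2 h, inf_comm t₁, ← sup_inf_assoc_of_le t₂ h, inf_comm]⟩

theorem DistributesOver.of_ge_left (h : t₁ ≤ s) : DistributesOver s t₁ t₂ :=
  ⟨by rw [inf_eq_right.2 h, inf_comm, sup_inf_assoc_of_le t₂ h, inf_comm],
    by rw [sup_eq_left.2 (inf_le_left.trans h), sup_eq_left.2 h, inf_sup_self]⟩

theorem distributesOver_of_not_incompTriple (h : ¬ IncompTriple s t₁ t₂) :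
    DistributesOver s t₁ t₂ := by
  simp only [IncompTriple, not_and_or, not_incompRel_iff_symmGen] at h
  rcases h with (h | h) | (h | h) | (h | h)
  · exact .of_le_left h
  · exact .of_ge_left h
  · exact distributesOver_swap.1 (.of_le_left h)
  · exact distributesOver_swap.1 (.of_ge_left h)
  · exact .of_le_right h
  · exact distributesOver_swap.1 (.of_le_right h)

end Lattice

theorem not_isChain_iff {α : Type*} [Preorder α] {T : Set α} :
    ¬ IsChain (· ≤ ·) T ↔ ∃ x ∈ T, ∃ y ∈ T, x ∥ y := by
  refine ⟨fun hT => ?_, fun ⟨x, hx, y, hy, hxy⟩ hT => ?_⟩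
  · simp only [IsChain, Set.Pairwise] at hT
    push Not at hT
    obtain ⟨x, hx, y, hy, -, hxy⟩ := hT
    exact ⟨x, hx, y, hy, hxy⟩
  · exact (hT.total hx hy).elim hxy.not_le hxy.not_ge

namespace Mnn

variable {n : ℕ}

instance instIsModularLattice : IsModularLattice (Mnn n) where
  sup_inf_le_assoc_of_le {x} y {z} hxz := by
    change le (inf (sup x y) z) (sup x (inf y z))
    change le x z at hxz
    cases x <;> cases y <;> cases z <;> grind [le, sup, inf]

theorem distributesOver_iff_not_incompTriple {s t₁ t₂ : Mnn n} :
    DistributesOver s t₁ t₂ ↔ ¬ IncompTriple s t₁ t₂ := by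
  refine ⟨?_, distributesOver_of_not_incompTriple⟩
  change inf s (sup t₁ t₂) = sup (inf s t₁) (inf s t₂) ∧
    sup s (inf t₁ t₂) = inf (sup s t₁) (sup s t₂) →
    ¬((¬ le s t₁ ∧ ¬ le t₁ s) ∧ (¬ le s t₂ ∧ ¬ le t₂ s) ∧ (¬ le t₁ t₂ ∧ ¬ le t₂ t₁))
  cases s <;> cases t₁ <;> cases t₂ <;> grind [le, sup, inf]

section Levels

/-- The two levels, indexed by `Bool` so that `!c` is the level opposite to `c`: `false` is
`{a₁, …, aₙ}` and `true` is `{b₁, …, bₙ}`. -/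
def level (n : ℕ) (c : Bool) : Set (Mnn n) := bif c then bLevel n else aLevel n

/-- The link element of the level `c`. -/
def link (h : 0 < n) (c : Bool) : Mnn n := bif c then bLink n h else aLink n h

/-- The elements of the level `c` other than its link. -/
def nonlinks (h : 0 < n) (c : Bool) : Set (Mnn n) := level n c \ {link h c}

variable {h : 0 < n} {c d : Bool} {x y : Mnn n}

theorem mem_star_iff_exists_level : x ∈ star n ↔ ∃ c, x ∈ level n c := by
  cases x <;> simp [star, level, aLevel, bLevel]

theorem level_subset_star (c : Bool) : level n c ⊆ star n :=
  fun _ hx => mem_star_iff_exists_level.2 ⟨c, hx⟩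

theorem star_eq_level_union (c : Bool) : star n = level n c ∪ level n (!c) := by
  ext x
  rw [mem_star_iff_exists_level, Set.mem_union]
  cases c <;> simp [or_comm]

theorem disjoint_level_not (c : Bool) : Disjoint (level n c) (level n (!c)) := by
  rw [Set.disjoint_left]
  cases c <;> rintro (_ | _ | i | i) <;> simp [level, aLevel, bLevel]

theorem notMem_level_not (hx : x ∈ level n c) : x ∉ level n (!c) :=
  Set.disjoint_left.1 (disjoint_level_not c) hx

theorem eq_of_mem_level (hc : x ∈ level n c) (hd : x ∈ level n d) : c = d := by
  by_contra hcd
  exact notMem_level_not hc (Bool.eq_not_of_ne (Ne.symm hcd) ▸ hd)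

theorem mem_level_not_iff (hx : x ∈ star n) : x ∈ level n (!c) ↔ x ∉ level n c := by
  cases c <;> cases x <;> simp_all [star, level, aLevel, bLevel]

theorem link_mem_level (h : 0 < n) (c : Bool) : link h c ∈ level n c := by
  cases c <;> simp [link, level, aLevel, bLevel, aLink, bLink]

theorem incomp_iff (h : 0 < n) : x ∥ y ↔
    x ≠ y ∧ ((∃ c, x ∈ level n c ∧ y ∈ level n c) ∨
      ∃ c, x ∈ nonlinks h c ∧ y ∈ nonlinks h (!c)) := by
  change ¬ le x y ∧ ¬ le y x ↔ _
  cases x <;> cases y <;>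
    simp [le, nonlinks, level, aLevel, bLevel, link, aLink, bLink, Fin.ext_iff, and_comm, eq_comm]

theorem incomp_of_mem_level (hx : x ∈ level n c) (hy : y ∈ level n c) (hxy : x ≠ y) : x ∥ y := by
  have hn : 0 < n := by
    cases c <;> obtain ⟨i, -⟩ := hx <;> exact i.pos
  exact (incomp_iff hn).2 ⟨hxy, .inl ⟨c, hx, hy⟩⟩

theorem incomp_of_mem_nonlinks_not (hx : x ∈ nonlinks h c) (hy : y ∈ nonlinks h (!c)) :
    x ∥ y := by
  refine (incomp_iff h).2 ⟨?_, .inr ⟨c, hx, hy⟩⟩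
  rintro rfl
  exact notMem_level_not hx.1 hy.1

theorem incomp_of_mem_nonlinks (hx : x ∈ nonlinks h c) (hy : y ∈ nonlinks h d) (hxy : x ≠ y) :
    x ∥ y := by
  rcases Bool.eq_or_eq_not d c with rfl | rfl
  · exact incomp_of_mem_level hx.1 hy.1 hxy
  · exact incomp_of_mem_nonlinks_not hx hy

theorem link_incomp_iff : link h c ∥ x ↔ x ∈ nonlinks h c := by
  refine ⟨fun hx => ?_, fun hx => incomp_of_mem_level (link_mem_level h c) hx.1 (Ne.symm hx.2)⟩
  obtain ⟨hne, ⟨d, hc, hx⟩ | ⟨d, hc, -⟩⟩ := (incomp_iff h).1 hx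
  · exact ⟨eq_of_mem_level hc (link_mem_level h c) ▸ hx, hne.symm⟩
  · exact (hc.2 (eq_of_mem_level hc.1 (link_mem_level h c) ▸ rfl)).elim

theorem notMem_range_link (hx : x ∈ nonlinks h c) : x ∉ Set.range (link h) := by
  rintro ⟨d, rfl⟩
  exact hx.2 (eq_of_mem_level (link_mem_level h d) hx.1 ▸ rfl)

theorem ncard_level (n : ℕ) (c : Bool) : (level n c).ncard = n := by
  cases c
  · exact (Set.ncard_range_of_injective fun _ _ => a.inj).trans (Nat.card_fin n)
  · exact (Set.ncard_range_of_injective fun _ _ => b.inj).trans (Nat.card_fin n)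

theorem ncard_nonlinks (h : 0 < n) (c : Bool) : (nonlinks h c).ncard = n - 1 := by
  rw [nonlinks, Set.ncard_sdiff_singleton_of_mem (link_mem_level h c), ncard_level]

theorem nonlinks_nonempty (h : 0 < n) (hn : 2 ≤ n) (c : Bool) : (nonlinks h c).Nonempty :=
  Set.nonempty_of_ncard_ne_zero (by rw [ncard_nonlinks]; omega)

end Levels

section MaximalSTPair

/-- `S` and `T` are disjoint subsets of `M_{n,n}*` for which `M_{n,n}` is `ST`-distributive, the
latter expressed through `distributesOver_iff_not_incompTriple`. -/
def IsSTPair (S T : Set (Mnn n)) : Prop :=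
  S ⊆ star n ∧ T ⊆ star n ∧ Disjoint S T ∧ ∀ s ∈ S, ∀ t₁ ∈ T, ∀ t₂ ∈ T, ¬ IncompTriple s t₁ t₂

variable {S T S' T' : Set (Mnn n)} {x : Mnn n}

theorem isSTPair_iff : IsSTPair S T ↔ S ⊆ star n ∧ T ⊆ star n ∧ S ∩ T = ∅ ∧ IsSTDistrib S T := by
  simp only [IsSTPair, isSTDistrib_iff, distributesOver_iff_not_incompTriple,
    Set.disjoint_iff_inter_eq_empty]

theorem IsSTPair.mono (hST : IsSTPair S T) (hS : S' ⊆ S) (hT : T' ⊆ T) : IsSTPair S' T' :=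
  ⟨hS.trans hST.1, hT.trans hST.2.1, hST.2.2.1.mono hS hT,
    fun s hs t₁ h₁ t₂ h₂ => hST.2.2.2 s (hS hs) t₁ (hT h₁) t₂ (hT h₂)⟩

theorem IsSTPair.insert_left_iff (hST : IsSTPair S T) : IsSTPair (insert x S) T ↔
    x ∈ star n ∧ x ∉ T ∧ ∀ t₁ ∈ T, ∀ t₂ ∈ T, ¬ IncompTriple x t₁ t₂ := by
  obtain ⟨hS, hT, hdisj, hobs⟩ := hST
  simp only [IsSTPair, Set.insert_subset_iff, Set.disjoint_insert_left, Set.forall_mem_insert]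
  tauto

theorem IsSTPair.insert_right_iff (hST : IsSTPair S T) : IsSTPair S (insert x T) ↔
    x ∈ star n ∧ x ∉ S ∧ ∀ s ∈ S, ∀ t ∈ T, ¬ IncompTriple s x t := by
  obtain ⟨hS, hT, hdisj, hobs⟩ := hST
  have hxx (s) : ¬ IncompTriple s x x := fun hs => hs.2.2.ne rfl
  simp only [IsSTPair, Set.insert_subset_iff, Set.disjoint_insert_right, Set.forall_mem_insert]
  refine ⟨fun ⟨_, hx, hxS, hxT⟩ => ⟨hx.1, hxS.1, fun s hs => (hxT s hs).1.2⟩,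
    fun ⟨hx, hxS, hxT⟩ => ⟨hS, ⟨hx, hT⟩, ⟨hxS, hdisj⟩, fun s hs =>
      ⟨⟨hxx s, hxT s hs⟩, fun t ht => ⟨fun hst => hxT s hs t ht hst.swap, hobs s hs t ht⟩⟩⟩⟩

theorem maximalSTPair_iff_maximal : MaximalSTPair n S T ↔ S.Nonempty ∧ T.Nonempty ∧
    Maximal (IsSTPair · T) S ∧ Maximal (IsSTPair S ·) T := by
  simp only [maximal_iff_forall_gt, isSTPair_iff, MaximalSTPair, not_exists]
  grind

theorem maximalSTPair_iff : MaximalSTPair n S T ↔ S.Nonempty ∧ T.Nonempty ∧ IsSTPair S T ∧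
    ∀ x ∈ star n, x ∉ S → x ∉ T →
      (∃ t₁ ∈ T, ∃ t₂ ∈ T, IncompTriple x t₁ t₂) ∧ ∃ s ∈ S, ∃ t ∈ T, IncompTriple s x t := by
  rw [maximalSTPair_iff_maximal,
    Set.maximal_iff_forall_insert fun _ _ hST hS => hST.mono hS subset_rfl,
    Set.maximal_iff_forall_insert fun _ _ hST hT => hST.mono subset_rfl hT]
  simp only [and_and_and_comm, and_self]
  refine and_congr_right fun _ => and_congr_right fun _ => and_congr_right fun hST => ?_
  simp only [hST.insert_left_iff, hST.insert_right_iff]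
  push Not
  grind

end MaximalSTPair

section Chains

variable {T : Set (Mnn n)} {c : Bool} {x y : Mnn n}

/-- `T` meets each level in at most one element. -/
def IsTransversal (T : Set (Mnn n)) : Prop := ∀ c, (T ∩ level n c).Subsingleton

theorem isTransversal_of_isChain (hT : IsChain (· ≤ ·) T) : IsTransversal T := by
  intro c x hx y hy
  by_contra hxy
  exact not_isChain_iff.2 ⟨x, hx.1, y, hy.1, incomp_of_mem_level hx.2 hy.2 hxy⟩ hT

theorem IsTransversal.exists_eq_pair (hT : IsTransversal T) (hstar : T ⊆ star n)
    (hnt : T.Nontrivial) : ∃ x ∈ level n false, ∃ y ∈ level n true, T = {x, y} := by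
  obtain ⟨u, hu, v, hv, huv⟩ := hnt
  obtain ⟨c, huc⟩ := mem_star_iff_exists_level.1 (hstar hu)
  have hvc : v ∈ level n (!c) :=
    (mem_level_not_iff (hstar hv)).2 fun hvc => huv (hT c ⟨hu, huc⟩ ⟨hv, hvc⟩)
  have heq : T = {u, v} := by
    refine (Set.pair_subset hu hv).antisymm' fun z hz => ?_
    rcases star_eq_level_union c ▸ hstar hz with hzc | hzc
    · exact .inl (hT c ⟨hz, hzc⟩ ⟨hu, huc⟩)
    · exact .inr (hT (!c) ⟨hz, hzc⟩ ⟨hv, hvc⟩)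
  cases c
  · exact ⟨u, huc, v, hvc, heq⟩
  · exact ⟨v, hvc, u, huc, heq.trans (Set.pair_comm u v)⟩

theorem le_iff_of_mem_level (h : 0 < n) (hx : x ∈ level n false) (hy : y ∈ level n true) :
    x ≤ y ↔ x = link h false ∨ y = link h true := by
  obtain ⟨i, rfl⟩ := hx
  obtain ⟨j, rfl⟩ := hy
  change (j : ℕ) = 0 ∨ (i : ℕ) = n - 1 ↔ _
  simp [link, aLink, bLink, Fin.ext_iff, or_comm]

theorem not_le_of_mem_level (hx : x ∈ level n false) (hy : y ∈ level n true) : ¬ y ≤ x := by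
  obtain ⟨i, rfl⟩ := hx
  obtain ⟨j, rfl⟩ := hy
  exact id

theorem isChain_iff_of_subset_star (hT : T ⊆ star n) (hne : T.Nonempty) :
    IsChain (· ≤ ·) T ↔ (∃ x ∈ star n, T = {x}) ∨
      ∃ x ∈ level n false, ∃ y ∈ level n true, x ≤ y ∧ T = {x, y} := by
  constructor
  · intro hchain
    obtain ⟨z, hz⟩ := hne
    rcases Set.eq_singleton_or_nontrivial hz with rfl | hnt
    · exact .inl ⟨z, hT rfl, rfl⟩
    · obtain ⟨x, hx, y, hy, rfl⟩ := (isTransversal_of_isChain hchain).exists_eq_pair hT hnt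
      have hle := (hchain.total (.inl rfl) (.inr rfl)).resolve_right (not_le_of_mem_level hx hy)
      exact .inr ⟨x, hx, y, hy, hle, rfl⟩
  · rintro (⟨x, -, rfl⟩ | ⟨x, -, y, -, hxy, rfl⟩)
    · exact .singleton
    · exact .pair hxy

end Chains

section Types

variable {h : 0 < n} {S T : Set (Mnn n)}

theorem exists_mem_nonlinks_false {p : Mnn n → Prop} :
    (∃ x ∈ nonlinks h false, p x) ↔ ∃ i : Fin n, a i ≠ aLink n h ∧ p (a i) := by
  simp [nonlinks, level, link, aLevel]

theorem exists_mem_nonlinks_true {p : Mnn n → Prop} :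
    (∃ x ∈ nonlinks h true, p x) ↔ ∃ i : Fin n, b i ≠ bLink n h ∧ p (b i) := by
  simp [nonlinks, level, link, bLevel]

theorem typeSLink_iff : TypeSLink n h S T ↔
    ∃ c, ∃ x ∈ nonlinks h c, S = {link h c} ∧ T = insert x (level n (!c)) := by
  simp only [Bool.exists_bool, exists_mem_nonlinks_false, exists_mem_nonlinks_true, TypeSLink,
    Set.union_singleton, Set.singleton_union, or_comm]
  rfl

theorem typeS2Links_iff : TypeS2Links n h S T ↔ ∃ x ∈ nonlinks h false, ∃ y ∈ nonlinks h true,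
    S = {link h false, link h true} ∧ T = {x, y} := by
  simp only [exists_mem_nonlinks_false, exists_mem_nonlinks_true, TypeS2Links, exists_and_left]
  rfl

theorem exists_range_eq_of_typeS2Links (hST : TypeS2Links n h S T) :
    ∃ t : Bool → Mnn n, (∀ c, t c ∈ nonlinks h c) ∧
      S = Set.range (link h) ∧ T = Set.range t := by
  obtain ⟨x, hx, y, hy, rfl, rfl⟩ := typeS2Links_iff.1 hST
  let t (c : Bool) : Mnn n := bif c then y else x
  exact ⟨t, Bool.forall_bool.2 ⟨hx, hy⟩, (Bool.range_eq _).symm, (Bool.range_eq t).symm⟩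

theorem typeSLevel_iff : TypeSLevel n h S T ↔
    ∃ c, ∃ x ∈ nonlinks h c, S = level n (!c) ∧ T = {x, link h c} := by
  simp only [Bool.exists_bool, exists_mem_nonlinks_false, exists_mem_nonlinks_true, TypeSLevel,
    Set.pair_comm (bLink n h)]
  rfl

theorem typeSLevelMinusLink_iff : TypeSLevelMinusLink n h S T ↔
    ∃ c, ∃ x ∈ nonlinks h c, S = nonlinks h (!c) ∧ T = {x, link h c, link h (!c)} := by
  have hperm (x y z : Mnn n) : ({x, y, z} : Set (Mnn n)) = {z, y, x} := by
    rw [Set.insert_comm, Set.pair_comm, Set.insert_comm, Set.pair_comm]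
  simp only [Bool.exists_bool, exists_mem_nonlinks_false, exists_mem_nonlinks_true,
    TypeSLevelMinusLink, hperm (aLink n h)]
  rfl

theorem typeTChain_iff : TypeTChain n h S T ↔
    T ⊆ star n ∧ T.Nonempty ∧ IsChain (· ≤ ·) T ∧ S = star n \ T := by
  constructor
  · rintro ⟨hchain, hS, i, rfl | rfl | rfl | rfl⟩ <;>
      exact ⟨by simp [Set.subset_def, star, aLink, bLink], by simp, hchain, hS⟩
  · rintro ⟨hT, hne, hchain, hS⟩
    refine ⟨hchain, hS, ?_⟩
    obtain ⟨x, hx, rfl⟩ | ⟨x, ⟨i, rfl⟩, y, ⟨j, rfl⟩, hxy, rfl⟩ :=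
      (isChain_iff_of_subset_star hT hne).1 hchain
    · obtain ⟨_ | _, i, rfl⟩ := mem_star_iff_exists_level.1 hx
      · exact ⟨i, .inl rfl⟩
      · exact ⟨i, .inr <| .inl rfl⟩
    · obtain hi | hj := (le_iff_of_mem_level h ⟨i, rfl⟩ ⟨j, rfl⟩).1 hxy
      · exact ⟨j, .inr <| .inr <| .inr <| by rw [hi]; rfl⟩
      · exact ⟨i, .inr <| .inr <| .inl <| by rw [hj]; rfl⟩

end Types

section MaximalOfType

variable {h : 0 < n} {S T : Set (Mnn n)} {c : Bool} {x : Mnn n}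

theorem typeSLevel_or_typeSLevelMinusLink_iff :
    TypeSLevel n h S T ∨ TypeSLevelMinusLink n h S T ↔ ∃ c, ∃ x ∈ nonlinks h c,
      {x, link h c} ⊆ T ∧ T ⊆ {x, link h c, link h (!c)} ∧ S = level n (!c) \ T := by
  have hdisj {c x} (hx : x ∈ nonlinks h c) : Disjoint (level n (!c)) {x, link h c} :=
    (disjoint_level_not c).symm.mono_right (Set.pair_subset hx.1 (link_mem_level h c))
  have hsdiff {c x} (hx : x ∈ nonlinks h c) :
      level n (!c) \ {x, link h c, link h (!c)} = nonlinks h (!c) := by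
    have hsplit : ({x, link h c, link h (!c)} : Set (Mnn n)) = {x, link h c} ∪ {link h (!c)} := by
      grind
    rw [nonlinks, hsplit, ← Set.sdiff_sdiff, (hdisj hx).sdiff_eq_left]
  rw [typeSLevel_iff, typeSLevelMinusLink_iff]
  constructor
  · rintro (⟨c, x, hx, rfl, rfl⟩ | ⟨c, x, hx, rfl, rfl⟩)
    · exact ⟨c, x, hx, subset_rfl, by grind, (hdisj hx).sdiff_eq_left.symm⟩
    · exact ⟨c, x, hx, by grind, subset_rfl, (hsdiff hx).symm⟩
  · rintro ⟨c, x, hx, hxT, hT, rfl⟩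
    by_cases hlink : link h (!c) ∈ T
    · obtain rfl : T = {x, link h c, link h (!c)} := by grind
      exact .inr ⟨c, x, hx, hsdiff hx, rfl⟩
    · obtain rfl : T = {x, link h c} := by grind
      exact .inl ⟨c, x, hx, (hdisj hx).sdiff_eq_left, rfl⟩

theorem maximalSTPair_of_isChain (hn : 2 ≤ n) (hT : T ⊆ star n) (hne : T.Nonempty)
    (hchain : IsChain (· ≤ ·) T) : MaximalSTPair n (star n \ T) T := by
  have hno {x y} (hx : x ∈ T) (hy : y ∈ T) : ¬ x ∥ y :=
    fun hxy => not_isChain_iff.2 ⟨x, hx, y, hy, hxy⟩ hchain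
  refine maximalSTPair_iff.2 ⟨?_, hne, ⟨Set.sdiff_subset, hT, Set.disjoint_sdiff_left,
    fun s _ t₁ h₁ t₂ h₂ hobs => hno h₁ h₂ hobs.2.2⟩, fun x hx hxS hxT => (hxS ⟨hx, hxT⟩).elim⟩
  have h : 0 < n := by omega
  obtain ⟨x, hx⟩ := nonlinks_nonempty h hn false
  rw [Set.sdiff_nonempty]
  exact fun hstar => hno (hstar (level_subset_star _ (link_mem_level h false)))
    (hstar (level_subset_star _ hx.1)) (link_incomp_iff.2 hx)

theorem maximalSTPair_of_typeSLink (hn : 2 ≤ n) (hST : TypeSLink n h S T) :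
    MaximalSTPair n S T := by
  obtain ⟨c, x, hx, rfl, rfl⟩ := typeSLink_iff.1 hST
  have hxT {t} (ht : t ∈ insert x (level n (!c))) (hlink : link h c ∥ t) : t = x :=
    ht.resolve_right (notMem_level_not (link_incomp_iff.1 hlink).1)
  refine maximalSTPair_iff.2 ⟨Set.singleton_nonempty _, Set.insert_nonempty _ _,
    ⟨?_, ?_, ?_, ?_⟩, fun y hy hyS hyT => ?_⟩
  · exact Set.singleton_subset_iff.2 (level_subset_star c (link_mem_level h c))
  · exact Set.insert_subset (level_subset_star c hx.1) (level_subset_star _)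
  · exact Set.disjoint_singleton_left.2 fun hlink =>
      hlink.elim (fun h' => hx.2 h'.symm) (notMem_level_not (link_mem_level h c))
  · rintro s rfl t₁ h₁ t₂ h₂ ⟨hst₁, hst₂, ht⟩
    exact ht.ne ((hxT h₁ hst₁).trans (hxT h₂ hst₂).symm)
  · have hyc : y ∈ nonlinks h c :=
      ⟨by_contra fun hyc => hyT (.inr ((mem_level_not_iff hy).2 hyc)), hyS⟩
    have hyx : y ∥ x := incomp_of_mem_nonlinks hyc hx fun hyx => hyT (.inl hyx)
    obtain ⟨z, hz⟩ := nonlinks_nonempty h hn (!c)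
    exact ⟨⟨x, .inl rfl, z, .inr hz.1, hyx, incomp_of_mem_nonlinks_not hyc hz,
        incomp_of_mem_nonlinks_not hx hz⟩,
      link h c, rfl, x, .inl rfl, link_incomp_iff.2 hyc, link_incomp_iff.2 hx, hyx⟩

theorem maximalSTPair_of_typeS2Links (hST : TypeS2Links n h S T) : MaximalSTPair n S T := by
  obtain ⟨t, ht, rfl, rfl⟩ := exists_range_eq_of_typeS2Links hST
  have eq_of_incomp {c d} (hcd : link h c ∥ t d) : d = c :=
    eq_of_mem_level (ht d).1 (link_incomp_iff.1 hcd).1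
  refine maximalSTPair_iff.2 ⟨Set.range_nonempty _, Set.range_nonempty _,
    ⟨?_, ?_, ?_, ?_⟩, fun z hz hzS hzT => ?_⟩
  · exact Set.range_subset_iff.2 fun c => level_subset_star c (link_mem_level h c)
  · exact Set.range_subset_iff.2 fun c => level_subset_star c (ht c).1
  · refine Set.disjoint_right.2 ?_
    rintro _ ⟨c, rfl⟩
    exact notMem_range_link (ht c)
  · rintro _ ⟨c, rfl⟩ _ ⟨d, rfl⟩ _ ⟨e, rfl⟩ ⟨hcd, hce, hde⟩
    rw [eq_of_incomp hcd, eq_of_incomp hce] at hde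
    exact hde.ne rfl
  · obtain ⟨c, hzc⟩ := mem_star_iff_exists_level.1 hz
    have hzc : z ∈ nonlinks h c := ⟨hzc, fun h' => hzS ⟨c, h'.symm⟩⟩
    have hzt : z ∥ t c := incomp_of_mem_nonlinks hzc (ht c) fun h' => hzT ⟨c, h'.symm⟩
    exact ⟨⟨t c, ⟨c, rfl⟩, t (!c), ⟨!c, rfl⟩, hzt, incomp_of_mem_nonlinks_not hzc (ht _),
        incomp_of_mem_nonlinks_not (ht c) (ht _)⟩,
      link h c, ⟨c, rfl⟩, t c, ⟨c, rfl⟩, link_incomp_iff.2 hzc, link_incomp_iff.2 (ht c), hzt⟩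

theorem not_incompTriple_of_subset {s t₁ t₂ : Mnn n} (hx : x ∈ nonlinks h c)
    (hT : T ⊆ {x, link h c, link h (!c)}) (hs : s ∈ level n (!c)) (h₁ : t₁ ∈ T) (h₂ : t₂ ∈ T) :
    ¬ IncompTriple s t₁ t₂ := by
  rintro ⟨hst₁, hst₂, ht⟩
  have hlink {t} (ht : t ∈ T) (hst : s ∥ t) : t = x ∨ t = link h (!c) := by
    rcases hT ht with htx | rfl | htl
    · exact .inl htx
    · exact (notMem_level_not (link_incomp_iff.1 hst.symm).1 hs).elim
    · exact .inr htl
  have hx_link : ¬ link h (!c) ∥ x := fun hxl => notMem_level_not hx.1 (link_incomp_iff.1 hxl).1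
  rcases hlink h₁ hst₁ with rfl | rfl <;> rcases hlink h₂ hst₂ with rfl | rfl
  · exact ht.ne rfl
  · exact hx_link ht.symm
  · exact hx_link ht
  · exact ht.ne rfl

theorem maximalSTPair_of_typeSLevel_or_typeSLevelMinusLink (hn : 2 ≤ n)
    (hST : TypeSLevel n h S T ∨ TypeSLevelMinusLink n h S T) : MaximalSTPair n S T := by
  obtain ⟨c, x, hx, hxT, hT, rfl⟩ := typeSLevel_or_typeSLevelMinusLink_iff.1 hST
  have hstar : {x, link h c, link h (!c)} ⊆ star n :=
    Set.insert_subset (level_subset_star c hx.1) (Set.pair_subset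
      (level_subset_star c (link_mem_level h c)) (level_subset_star _ (link_mem_level h _)))
  obtain ⟨z, hz⟩ := nonlinks_nonempty h hn (!c)
  have hzT : z ∉ T := fun hzT => by
    rcases hT hzT with rfl | rfl | rfl
    · exact notMem_level_not hx.1 hz.1
    · exact notMem_level_not (link_mem_level h c) hz.1
    · exact hz.2 rfl
  refine maximalSTPair_iff.2 ⟨⟨z, hz.1, hzT⟩, ⟨x, hxT (.inl rfl)⟩, ⟨?_, hT.trans hstar,
    Set.disjoint_sdiff_left, ?_⟩, fun y hy hyS hyT => ?_⟩
  · exact Set.sdiff_subset.trans (level_subset_star _)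
  · exact fun s hs t₁ h₁ t₂ h₂ => not_incompTriple_of_subset hx hT hs.1 h₁ h₂
  · have hyc : y ∈ level n c := by_contra fun hyc => hyS ⟨(mem_level_not_iff hy).2 hyc, hyT⟩
    have hyc : y ∈ nonlinks h c := ⟨hyc, fun h' => hyT (h' ▸ hxT (.inr rfl))⟩
    have hyx : y ∥ x := incomp_of_mem_nonlinks hyc hx fun h' => hyT (h' ▸ hxT (.inl rfl))
    exact ⟨⟨x, hxT (.inl rfl), link h c, hxT (.inr rfl), hyx, (link_incomp_iff.2 hyc).symm,
        (link_incomp_iff.2 hx).symm⟩,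
      z, ⟨hz.1, hzT⟩, x, hxT (.inl rfl), (incomp_of_mem_nonlinks_not hyc hz).symm,
        (incomp_of_mem_nonlinks_not hx hz).symm, hyx⟩

end MaximalOfType

section Classification

variable {h : 0 < n} {S T : Set (Mnn n)} {c d : Bool} {x y u : Mnn n}

theorem IsSTPair.subset_level_not (hST : IsSTPair S T) (hx : x ∈ T ∩ level n c)
    (hy : y ∈ T ∩ level n c) (hxy : x ≠ y) : S ⊆ level n (!c) := by
  obtain ⟨hS, -, hdisj, hobs⟩ := hST
  refine fun s hs => (mem_level_not_iff (hS hs)).2 fun hsc => ?_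
  have hne {t} (ht : t ∈ T) : s ≠ t := hdisj.ne_of_mem hs ht
  exact hobs s hs x hx.1 y hy.1 ⟨incomp_of_mem_level hsc hx.2 (hne hx.1),
    incomp_of_mem_level hsc hy.2 (hne hy.1), incomp_of_mem_level hx.2 hy.2 hxy⟩

theorem IsSTPair.subset_range_link (hST : IsSTPair S T) (hx : x ∈ T ∩ nonlinks h c)
    (hy : y ∈ T ∩ nonlinks h d) (hxy : x ≠ y) : S ⊆ Set.range (link h) := by
  obtain ⟨hS, -, hdisj, hobs⟩ := hST
  intro s hs
  obtain ⟨e, hse⟩ := mem_star_iff_exists_level.1 (hS hs)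
  by_contra hlink
  have hse : s ∈ nonlinks h e := ⟨hse, fun h' => hlink ⟨e, h'.symm⟩⟩
  have hne {t} (ht : t ∈ T) : s ≠ t := hdisj.ne_of_mem hs ht
  exact hobs s hs x hx.1 y hy.1 ⟨incomp_of_mem_nonlinks hse hx.2 (hne hx.1),
    incomp_of_mem_nonlinks hse hy.2 (hne hy.1), incomp_of_mem_nonlinks hx.2 hy.2 hxy⟩

theorem eq_singleton_link (hne : S.Nonempty) (hlevel : S ⊆ level n c)
    (hlink : S ⊆ Set.range (link h)) : S = {link h c} := by
  refine hne.subset_singleton_iff.1 fun s hs => ?_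
  obtain ⟨d, rfl⟩ := hlink hs
  rw [eq_of_mem_level (link_mem_level h d) (hlevel hs)]
  rfl

theorem eq_sdiff_of_maximalSTPair {A : Set (Mnn n)} (hmax : MaximalSTPair n S T) (hA : A ⊆ star n)
    (hSA : S ⊆ A) (hfree : ∀ x ∈ A, ∀ t₁ ∈ T, ∀ t₂ ∈ T, ¬ IncompTriple x t₁ t₂) : S = A \ T := by
  obtain ⟨-, -, hST, hadd⟩ := maximalSTPair_iff.1 hmax
  refine Set.Subset.antisymm (fun s hs => ⟨hSA hs, hST.2.2.1.notMem_of_mem_left hs⟩)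
    fun x hx => by_contra fun hxS => ?_
  obtain ⟨⟨t₁, h₁, t₂, h₂, hobs⟩, -⟩ := hadd x (hA hx.1) hxS hx.2
  exact hfree x hx.1 t₁ h₁ t₂ h₂ hobs

theorem typeSLink_of_maximalSTPair (hmax : MaximalSTPair n S T) (hx : x ∈ T ∩ nonlinks h c)
    (hy : y ∈ T ∩ level n c) (hxy : x ≠ y) (hu : u ∈ T ∩ nonlinks h (!c)) :
    TypeSLink n h S T := by
  obtain ⟨hne, -, hST, hadd⟩ := maximalSTPair_iff.1 hmax
  have hxu : x ≠ u := (incomp_of_mem_nonlinks_not hx.2 hu.2).ne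
  obtain rfl : S = {link h (!c)} := eq_singleton_link hne
    (hST.subset_level_not ⟨hx.1, hx.2.1⟩ hy hxy) (hST.subset_range_link hx hu hxu)
  refine typeSLink_iff.2 ⟨!c, u, hu.2, rfl, ?_⟩
  rw [Bool.not_not]
  refine Set.Subset.antisymm (fun v hv => or_iff_not_imp_left.2 fun hvu => ?_)
    (Set.insert_subset hu.1 fun v hv => by_contra fun hvT => ?_)
  · by_contra hvc
    have hvc : v ∈ level n (!c) := (mem_level_not_iff (hST.2.1 hv)).2 hvc
    exact notMem_level_not (link_mem_level h _)
      (hST.subset_level_not ⟨hv, hvc⟩ ⟨hu.1, hu.2.1⟩ hvu rfl)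
  · have hvS : v ∉ ({link h (!c)} : Set (Mnn n)) := by
      rintro rfl
      exact notMem_level_not hv (link_mem_level h _)
    obtain ⟨-, s, rfl, t, -, hlink, -⟩ := hadd v (level_subset_star c hv) hvS hvT
    exact notMem_level_not hv (link_incomp_iff.1 hlink).1

theorem typeSLevel_or_of_maximalSTPair (hn : 2 ≤ n) (hmax : MaximalSTPair n S T)
    (hx : x ∈ T ∩ nonlinks h c) (hy : y ∈ T ∩ level n c) (hxy : x ≠ y)
    (hT : Disjoint T (nonlinks h (!c))) :
    TypeSLevel n h S T ∨ TypeSLevelMinusLink n h S T := by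
  obtain ⟨hne, -, hST, hadd⟩ := maximalSTPair_iff.1 hmax
  have hS : S ⊆ level n (!c) := hST.subset_level_not ⟨hx.1, hx.2.1⟩ hy hxy
  have hunique {v} (hv : v ∈ T ∩ nonlinks h c) : v = x := by
    by_contra hvx
    obtain rfl : S = {link h (!c)} := eq_singleton_link hne hS (hST.subset_range_link hv hx hvx)
    obtain ⟨z, hz⟩ := nonlinks_nonempty h hn (!c)
    obtain ⟨-, s, rfl, t, ht, -, hst, -⟩ := hadd z (level_subset_star _ hz.1) hz.2
      (hT.notMem_of_mem_right hz)
    exact hT.notMem_of_mem_left ht (link_incomp_iff.1 hst)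
  have hTsub : T ⊆ {x, link h c, link h (!c)} := by
    intro v hv
    obtain ⟨d, hvd⟩ := mem_star_iff_exists_level.1 (hST.2.1 hv)
    by_cases hlink : v = link h d
    · rcases Bool.eq_or_eq_not d c with rfl | rfl
      · exact .inr (.inl hlink)
      · exact .inr (.inr hlink)
    · rcases Bool.eq_or_eq_not d c with rfl | rfl
      · exact .inl (hunique ⟨hv, hvd, hlink⟩)
      · exact (hT.notMem_of_mem_left hv ⟨hvd, hlink⟩).elim
  have hlink : link h c ∈ T := by
    obtain rfl : y = link h c := by_contra fun hyl => hxy (hunique ⟨hy.1, hy.2, hyl⟩).symm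
    exact hy.1
  exact typeSLevel_or_typeSLevelMinusLink_iff.2 ⟨c, x, hx.2, Set.pair_subset hx.1 hlink, hTsub,
    eq_sdiff_of_maximalSTPair hmax (level_subset_star _) hS fun s hs t₁ h₁ t₂ h₂ =>
      not_incompTriple_of_subset hx.2 hTsub hs h₁ h₂⟩

theorem typeS2Links_of_maximalSTPair (hmax : MaximalSTPair n S T) (hT : IsTransversal T)
    (hchain : ¬ IsChain (· ≤ ·) T) : TypeS2Links n h S T := by
  obtain ⟨-, -, hST, -⟩ := maximalSTPair_iff.1 hmax
  have hnt : T.Nontrivial := by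
    obtain ⟨x, hx, y, hy, hxy⟩ := not_isChain_iff.1 hchain
    exact ⟨x, hx, y, hy, hxy.ne⟩
  obtain ⟨x, hx_level, y, hy_level, rfl⟩ := hT.exists_eq_pair hST.2.1 hnt
  have hxy : ¬ x ≤ y := fun hxy => hchain (.pair hxy)
  rw [le_iff_of_mem_level h hx_level hy_level, not_or] at hxy
  have hx : x ∈ nonlinks h false := ⟨hx_level, hxy.1⟩
  have hy : y ∈ nonlinks h true := ⟨hy_level, hxy.2⟩
  have hS : S ⊆ Set.range (link h) := hST.subset_range_link ⟨.inl rfl, hx⟩ ⟨.inr rfl, hy⟩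
    (incomp_of_mem_nonlinks_not hx hy).ne
  refine typeS2Links_iff.2 ⟨x, hx, y, hy, ?_, rfl⟩
  rw [eq_sdiff_of_maximalSTPair hmax ?_ hS ?_, ← Bool.range_eq, sdiff_eq_left]
  · exact Set.disjoint_insert_right.2
      ⟨notMem_range_link hx, Set.disjoint_singleton_right.2 (notMem_range_link hy)⟩
  · exact Set.range_subset_iff.2 fun c => level_subset_star c (link_mem_level h c)
  · rintro _ ⟨c, rfl⟩ t₁ h₁ t₂ h₂ ⟨hct₁, hct₂, ht⟩
    exact ht.ne (hT c ⟨h₁, (link_incomp_iff.1 hct₁).1⟩ ⟨h₂, (link_incomp_iff.1 hct₂).1⟩)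

theorem typeTChain_of_maximalSTPair (hmax : MaximalSTPair n S T)
    (hchain : IsChain (· ≤ ·) T) : TypeTChain n h S T := by
  obtain ⟨-, hne, hST, -⟩ := maximalSTPair_iff.1 hmax
  exact typeTChain_iff.2 ⟨hST.2.1, hne, hchain, eq_sdiff_of_maximalSTPair hmax subset_rfl hST.1
    fun s _ t₁ h₁ t₂ h₂ hobs => not_isChain_iff.2 ⟨t₁, h₁, t₂, h₂, hobs.2.2⟩ hchain⟩

theorem maximalSTPair_iff_type (h : 0 < n) (hn : 2 ≤ n) : MaximalSTPair n S T ↔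
    TypeTChain n h S T ∨ TypeSLink n h S T ∨ TypeS2Links n h S T ∨
      TypeSLevel n h S T ∨ TypeSLevelMinusLink n h S T := by
  constructor
  · intro hmax
    by_cases hchain : IsChain (· ≤ ·) T
    · exact .inl (typeTChain_of_maximalSTPair hmax hchain)
    right
    by_cases htrans : IsTransversal T
    · exact .inr (.inl (typeS2Links_of_maximalSTPair hmax htrans hchain))
    obtain ⟨c, x, hx, y, hy, hxy⟩ : ∃ c, ∃ x ∈ T ∩ nonlinks h c, ∃ y ∈ T ∩ level n c, x ≠ y := by
      simp only [IsTransversal, Set.not_subsingleton_iff, not_forall] at htrans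
      obtain ⟨c, hT⟩ := htrans
      obtain ⟨x, hx, hxc⟩ := hT.exists_ne (link h c)
      obtain ⟨y, hy, hyx⟩ := hT.exists_ne x
      exact ⟨c, x, ⟨hx.1, hx.2, hxc⟩, y, hy, hyx.symm⟩
    by_cases hT : Disjoint T (nonlinks h (!c))
    · exact .inr (.inr (typeSLevel_or_of_maximalSTPair hn hmax hx hy hxy hT))
    · obtain ⟨u, hu⟩ := Set.not_disjoint_iff.1 hT
      exact .inl (typeSLink_of_maximalSTPair hmax hx hy hxy hu)
  · rintro (hST | hST | hST | hST)
    · obtain ⟨hT, hne, hchain, rfl⟩ := typeTChain_iff.1 hST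
      exact maximalSTPair_of_isChain hn hT hne hchain
    · exact maximalSTPair_of_typeSLink hn hST
    · exact maximalSTPair_of_typeS2Links hST
    · exact maximalSTPair_of_typeSLevel_or_typeSLevelMinusLink hn hST

end Classification

section Counting

variable {h : 0 < n}

instance instFinite : Finite (Mnn n) :=
  .of_finite_univ <| ((Set.toFinite {bot, top}).union
    ((Set.finite_range a).union (Set.finite_range b))).subset fun x _ => by cases x <;> simp

theorem ncard_star (n : ℕ) : (star n).ncard = 2 * n := by
  rw [star_eq_level_union false, Set.ncard_union_eq (disjoint_level_not _), ncard_level,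
    ncard_level, two_mul]

theorem ncard_setOf_exists_nonlinks {β : Type*} {f : Bool → Mnn n → β}
    (hf : ∀ c, ∀ x ∈ nonlinks h c, ∀ d, ∀ y ∈ nonlinks h d, f c x = f d y → x = y) :
    {q | ∃ c, ∃ x ∈ nonlinks h c, q = f c x}.ncard = 2 * n - 2 := by
  have hunion : {q | ∃ c, ∃ x ∈ nonlinks h c, q = f c x} =
      f false '' nonlinks h false ∪ f true '' nonlinks h true := by
    ext q
    simp only [Set.mem_ofPred_eq, Bool.exists_bool, Set.mem_union, Set.mem_image, eq_comm]
  have hdisj : Disjoint (f false '' nonlinks h false) (f true '' nonlinks h true) := by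
    refine Set.disjoint_left.2 ?_
    rintro _ ⟨x, hx, rfl⟩ ⟨y, hy, hxy⟩
    obtain rfl := hf _ _ hy _ _ hx hxy
    exact notMem_level_not hx.1 hy.1
  have hinj (c) : Set.InjOn (f c) (nonlinks h c) := fun x hx y hy => hf c x hx c y hy
  rw [hunion, Set.ncard_union_eq hdisj ((Set.toFinite _).image _) ((Set.toFinite _).image _),
    (hinj _).ncard_image, (hinj _).ncard_image, ncard_nonlinks,
    ncard_nonlinks]
  omega

theorem link_injective (h : 0 < n) : Function.Injective (link h) := fun c d hcd =>
  eq_of_mem_level (link_mem_level h c) (hcd ▸ link_mem_level h d)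

theorem ncard_typeSLink (h : 0 < n) :
    {p : Set (Mnn n) × Set (Mnn n) | TypeSLink n h p.1 p.2}.ncard = 2 * n - 2 := by
  simp only [typeSLink_iff, ← Prod.ext_iff (y := (_, _))]
  refine ncard_setOf_exists_nonlinks fun c x hx d y _ hxy => ?_
  obtain ⟨hS, hT⟩ := Prod.ext_iff.1 hxy
  obtain rfl := link_injective h (Set.singleton_injective hS)
  exact (Set.insert_inj (notMem_level_not hx.1)).1 hT

theorem ncard_typeSLevel (h : 0 < n) :
    {p : Set (Mnn n) × Set (Mnn n) | TypeSLevel n h p.1 p.2}.ncard = 2 * n - 2 := by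
  simp only [typeSLevel_iff, ← Prod.ext_iff (y := (_, _))]
  refine ncard_setOf_exists_nonlinks fun c x hx d y _ hxy => ?_
  have hxT : x ∈ ({y, link h d} : Set (Mnn n)) :=
    (congrArg Prod.snd hxy).subset (Set.mem_insert x _)
  exact hxT.resolve_right fun hxd => notMem_range_link hx ⟨d, hxd.symm⟩

theorem ncard_typeSLevelMinusLink (h : 0 < n) :
    {p : Set (Mnn n) × Set (Mnn n) | TypeSLevelMinusLink n h p.1 p.2}.ncard = 2 * n - 2 := by
  simp only [typeSLevelMinusLink_iff, ← Prod.ext_iff (y := (_, _))]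
  refine ncard_setOf_exists_nonlinks fun c x hx d y _ hxy => ?_
  have hxT : x ∈ ({y, link h d, link h (!d)} : Set (Mnn n)) :=
    (congrArg Prod.snd hxy).subset (Set.mem_insert x _)
  refine hxT.resolve_right ?_
  rintro (hxd | hxd)
  · exact notMem_range_link hx ⟨d, hxd.symm⟩
  · exact notMem_range_link hx ⟨!d, hxd.symm⟩

theorem injOn_pair_level : Set.InjOn (fun p : Mnn n × Mnn n => ({p.1, p.2} : Set (Mnn n)))
    (level n false ×ˢ level n true) := by
  rintro ⟨x, y⟩ ⟨hx, -⟩ ⟨u, v⟩ ⟨-, hv⟩ hxy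
  rcases Set.pair_eq_pair_iff.1 hxy with ⟨hxu, hyv⟩ | ⟨hxv, -⟩
  · exact Prod.ext hxu hyv
  · exact (notMem_level_not hx (hxv ▸ hv)).elim

theorem nonlinks_prod_subset : nonlinks h false ×ˢ nonlinks h true ⊆
    level n false ×ˢ level n true :=
  Set.prod_mono Set.sdiff_subset Set.sdiff_subset

theorem ncard_typeS2Links (h : 0 < n) :
    {p : Set (Mnn n) × Set (Mnn n) | TypeS2Links n h p.1 p.2}.ncard = (n - 1) * (n - 1) := by
  have himage : {p : Set (Mnn n) × Set (Mnn n) | TypeS2Links n h p.1 p.2} =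
      (fun q : Mnn n × Mnn n => ({link h false, link h true}, {q.1, q.2})) ''
        (nonlinks h false ×ˢ nonlinks h true) := by
    ext ⟨S, T⟩
    simp only [Set.mem_ofPred_eq, typeS2Links_iff, Set.mem_image, Set.mem_prod, Prod.exists,
      Prod.mk.injEq, and_assoc, exists_and_left, eq_comm]
  rw [himage, Set.InjOn.ncard_image, Set.ncard_prod, ncard_nonlinks, ncard_nonlinks]
  exact fun p hp q hq hpq => injOn_pair_level (nonlinks_prod_subset hp) (nonlinks_prod_subset hq)
    (Prod.ext_iff.1 hpq).2

theorem mul_self_eq_pred_mul_self_add (h : 0 < n) : n * n = (n - 1) * (n - 1) + (2 * n - 1) := by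
  obtain ⟨m, rfl⟩ := Nat.exists_eq_add_of_lt h
  simp only [zero_add, Nat.add_sub_cancel, Nat.mul_add_one, Nat.add_one_mul]
  omega

theorem ncard_setOf_level_le (h : 0 < n) :
    {q ∈ level n false ×ˢ level n true | q.1 ≤ q.2}.ncard = 2 * n - 1 := by
  have hsdiff : {q ∈ level n false ×ˢ level n true | q.1 ≤ q.2} =
      (level n false ×ˢ level n true) \ (nonlinks h false ×ˢ nonlinks h true) := by
    ext ⟨x, y⟩
    refine and_congr_right fun ⟨hx, hy⟩ => ?_
    rw [le_iff_of_mem_level h hx hy]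
    simp only [nonlinks, Set.mem_prod, Set.mem_sdiff, hx, hy, Set.mem_singleton_iff, true_and]
    tauto
  rw [hsdiff, Set.ncard_sdiff nonlinks_prod_subset, Set.ncard_prod, Set.ncard_prod, ncard_level,
    ncard_level, ncard_nonlinks, ncard_nonlinks,
    mul_self_eq_pred_mul_self_add h, Nat.add_sub_cancel_left]

theorem ncard_setOf_isChain (h : 0 < n) :
    {T | T ⊆ star n ∧ T.Nonempty ∧ IsChain (· ≤ ·) T}.ncard = 4 * n - 1 := by
  let P : Set (Mnn n × Mnn n) := {q ∈ level n false ×ˢ level n true | q.1 ≤ q.2}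
  have hchains : {T | T ⊆ star n ∧ T.Nonempty ∧ IsChain (· ≤ ·) T} =
      singleton '' star n ∪ (fun q => {q.1, q.2}) '' P := by
    ext T
    constructor
    · rintro ⟨hT, hne, hchain⟩
      obtain ⟨x, hx, rfl⟩ | ⟨x, hx, y, hy, hxy, rfl⟩ := (isChain_iff_of_subset_star hT hne).1 hchain
      · exact .inl ⟨x, hx, rfl⟩
      · exact .inr ⟨(x, y), ⟨⟨hx, hy⟩, hxy⟩, rfl⟩
    · rintro (⟨x, hx, rfl⟩ | ⟨⟨x, y⟩, ⟨⟨hx, hy⟩, hxy⟩, rfl⟩)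
      · exact ⟨Set.singleton_subset_iff.2 hx, Set.singleton_nonempty x, .singleton⟩
      · exact ⟨Set.pair_subset (level_subset_star _ hx) (level_subset_star _ hy),
          Set.insert_nonempty _ _, .pair hxy⟩
  have hdisj : Disjoint ((singleton : Mnn n → Set (Mnn n)) '' star n)
      ((fun q => {q.1, q.2}) '' P) := by
    refine Set.disjoint_left.2 ?_
    rintro _ ⟨z, -, rfl⟩ ⟨⟨x, y⟩, ⟨⟨hx, hy⟩, -⟩, hxy⟩
    obtain rfl : x = y := (hxy.subset (.inl rfl)).trans (hxy.subset (.inr rfl)).symm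
    exact notMem_level_not hx hy
  rw [hchains, Set.ncard_union_eq hdisj, Set.ncard_image_of_injective _ Set.singleton_injective,
    (injOn_pair_level.mono (Set.sep_subset _ _)).ncard_image, ncard_star, ncard_setOf_level_le h]
  omega

theorem ncard_typeTChain (h : 0 < n) :
    {p : Set (Mnn n) × Set (Mnn n) | TypeTChain n h p.1 p.2}.ncard = 4 * n - 1 := by
  have himage : {p : Set (Mnn n) × Set (Mnn n) | TypeTChain n h p.1 p.2} =
      (fun T => (star n \ T, T)) '' {T | T ⊆ star n ∧ T.Nonempty ∧ IsChain (· ≤ ·) T} := by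
    ext ⟨S, T⟩
    simp only [Set.mem_ofPred_eq, typeTChain_iff, Set.mem_image, Prod.mk.injEq]
    grind
  rw [himage, Set.ncard_image_of_injective _ fun _ _ hT => congrArg Prod.snd hT,
    ncard_setOf_isChain h]

end Counting

section TypeDisjoint

variable {h : 0 < n} {S T : Set (Mnn n)}

theorem subset_range_link_of_typeSLink_or_typeS2Links
    (hST : TypeSLink n h S T ∨ TypeS2Links n h S T) : S ⊆ Set.range (link h) := by
  rcases hST with hST | hST
  · obtain ⟨c, x, -, rfl, -⟩ := typeSLink_iff.1 hST
    exact Set.singleton_subset_iff.2 ⟨c, rfl⟩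
  · obtain ⟨t, -, rfl, -⟩ := exists_range_eq_of_typeS2Links hST
    exact subset_rfl

theorem not_subset_range_link_of_typeSLevel_or_typeSLevelMinusLink (hn : 2 ≤ n)
    (hST : TypeSLevel n h S T ∨ TypeSLevelMinusLink n h S T) : ¬ S ⊆ Set.range (link h) := by
  obtain ⟨c, hc⟩ : ∃ c, nonlinks h c ⊆ S := by
    rcases hST with hST | hST
    · obtain ⟨c, x, -, rfl, -⟩ := typeSLevel_iff.1 hST
      exact ⟨!c, Set.sdiff_subset⟩
    · obtain ⟨c, x, -, rfl, -⟩ := typeSLevelMinusLink_iff.1 hST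
      exact ⟨!c, subset_rfl⟩
  obtain ⟨z, hz⟩ := nonlinks_nonempty h hn c
  exact fun hS => notMem_range_link hz (hS (hc hz))

theorem not_isChain_of_type (hn : 2 ≤ n) (hST : TypeSLink n h S T ∨ TypeS2Links n h S T ∨
    TypeSLevel n h S T ∨ TypeSLevelMinusLink n h S T) : ¬ IsChain (· ≤ ·) T := by
  rw [not_isChain_iff]
  rcases hST with hST | hST | hST
  · obtain ⟨c, x, hx, -, rfl⟩ := typeSLink_iff.1 hST
    obtain ⟨z, hz⟩ := nonlinks_nonempty h hn (!c)
    exact ⟨x, .inl rfl, z, .inr hz.1, incomp_of_mem_nonlinks_not hx hz⟩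
  · obtain ⟨x, hx, y, hy, -, rfl⟩ := typeS2Links_iff.1 hST
    exact ⟨x, .inl rfl, y, .inr rfl, incomp_of_mem_nonlinks_not hx hy⟩
  · obtain ⟨c, x, hx, hxT, -⟩ := typeSLevel_or_typeSLevelMinusLink_iff.1 hST
    exact ⟨link h c, hxT (.inr rfl), x, hxT (.inl rfl), link_incomp_iff.2 hx⟩

theorem not_typeS2Links_of_typeSLink (hST : TypeSLink n h S T) : ¬ TypeS2Links n h S T := by
  intro hST'
  obtain ⟨c, x, -, hS, -⟩ := typeSLink_iff.1 hST
  obtain ⟨t, -, hS', -⟩ := exists_range_eq_of_typeS2Links hST'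
  have hlink : link h (!c) ∈ ({link h c} : Set (Mnn n)) := hS ▸ hS' ▸ ⟨!c, rfl⟩
  exact Bool.not_ne_self c (link_injective h hlink)

theorem not_typeSLevelMinusLink_of_typeSLevel (hST : TypeSLevel n h S T) :
    ¬ TypeSLevelMinusLink n h S T := by
  intro hST'
  obtain ⟨c, x, -, hS, -⟩ := typeSLevel_iff.1 hST
  obtain ⟨d, y, -, hS', -⟩ := typeSLevelMinusLink_iff.1 hST'
  have hlink : link h (!c) ∈ nonlinks h (!d) := hS' ▸ hS ▸ link_mem_level h _
  exact notMem_range_link hlink ⟨_, rfl⟩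


theorem ncard_maximalSTPair (h : 0 < n) (hn : 2 ≤ n) :
    {p : Set (Mnn n) × Set (Mnn n) | MaximalSTPair n p.1 p.2}.ncard =
      {p : Set (Mnn n) × Set (Mnn n) | TypeTChain n h p.1 p.2}.ncard +
      ({p : Set (Mnn n) × Set (Mnn n) | TypeSLink n h p.1 p.2}.ncard +
        {p : Set (Mnn n) × Set (Mnn n) | TypeS2Links n h p.1 p.2}.ncard +
      ({p : Set (Mnn n) × Set (Mnn n) | TypeSLevel n h p.1 p.2}.ncard +
        {p : Set (Mnn n) × Set (Mnn n) | TypeSLevelMinusLink n h p.1 p.2}.ncard)) := by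
  have hunion : {p : Set (Mnn n) × Set (Mnn n) | MaximalSTPair n p.1 p.2} =
      {p | TypeTChain n h p.1 p.2} ∪
        (({p | TypeSLink n h p.1 p.2} ∪ {p | TypeS2Links n h p.1 p.2}) ∪
          ({p | TypeSLevel n h p.1 p.2} ∪ {p | TypeSLevelMinusLink n h p.1 p.2})) :=
    Set.ext fun p => (maximalSTPair_iff_type h hn).trans (or_congr_right or_assoc.symm)
  rw [hunion, Set.ncard_union_eq, Set.ncard_union_eq, Set.ncard_union_eq, Set.ncard_union_eq]
  · exact Set.disjoint_left.2 fun _ => not_typeSLevelMinusLink_of_typeSLevel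
  · exact Set.disjoint_left.2 fun _ => not_typeS2Links_of_typeSLink
  · exact Set.disjoint_left.2 fun _ hp hq =>
      not_subset_range_link_of_typeSLevel_or_typeSLevelMinusLink hn hq
        (subset_range_link_of_typeSLink_or_typeS2Links hp)
  · exact Set.disjoint_left.2 fun _ hp hq => not_isChain_of_type hn (or_assoc.1 hq) hp.1

theorem setOf_maximalSTPair_and_eq {R : Set (Mnn n) → Set (Mnn n) → Prop}
    (hR : ∀ S T, R S T → MaximalSTPair n S T) :
    {p : Set (Mnn n) × Set (Mnn n) | MaximalSTPair n p.1 p.2 ∧ R p.1 p.2} = {p | R p.1 p.2} :=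
  Set.ext fun p => and_iff_right_of_imp (hR p.1 p.2)

end TypeDisjoint

end Mnn

theorem count_of_maximal_ST_pairs_general (n : ℕ) (hn : 2 ≤ n) :
    {p : Set (Mnn n) × Set (Mnn n) | MaximalSTPair n p.1 p.2}.ncard
      = n ^ 2 + 8 * n - 6 ∧
    {p : Set (Mnn n) × Set (Mnn n) |
      MaximalSTPair n p.1 p.2 ∧ TypeTChain n (by omega) p.1 p.2}.ncard
      = 4 * n - 1 ∧
    {p : Set (Mnn n) × Set (Mnn n) |
      MaximalSTPair n p.1 p.2 ∧ TypeSLink n (by omega) p.1 p.2}.ncard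
      = 2 * n - 2 ∧
    {p : Set (Mnn n) × Set (Mnn n) |
      MaximalSTPair n p.1 p.2 ∧ TypeS2Links n (by omega) p.1 p.2}.ncard
      = n ^ 2 - 2 * n + 1 ∧
    {p : Set (Mnn n) × Set (Mnn n) |
      MaximalSTPair n p.1 p.2 ∧ TypeSLevel n (by omega) p.1 p.2}.ncard
      = 2 * n - 2 ∧
    {p : Set (Mnn n) × Set (Mnn n) |
      MaximalSTPair n p.1 p.2 ∧ TypeSLevelMinusLink n (by omega) p.1 p.2}.ncard
      = 2 * n - 2 := by
  have h : 0 < n := by omega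
  have hmax {S T : Set (Mnn n)} := (Mnn.maximalSTPair_iff_type (S := S) (T := T) h hn).2
  have htotal := Mnn.ncard_maximalSTPair h hn
  rw [Mnn.ncard_typeTChain, Mnn.ncard_typeSLink, Mnn.ncard_typeS2Links, Mnn.ncard_typeSLevel,
    Mnn.ncard_typeSLevelMinusLink] at htotal
  have hsq := Mnn.mul_self_eq_pred_mul_self_add h
  have hpos : 0 < (n - 1) * (n - 1) := Nat.mul_pos (by omega) (by omega)
  rw [sq, Mnn.setOf_maximalSTPair_and_eq fun S T hST => hmax (.inl hST),
    Mnn.setOf_maximalSTPair_and_eq fun S T hST => hmax (.inr (.inl hST)),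
    Mnn.setOf_maximalSTPair_and_eq fun S T hST => hmax (.inr (.inr (.inl hST))),
    Mnn.setOf_maximalSTPair_and_eq fun S T hST => hmax (.inr (.inr (.inr (.inl hST)))),
    Mnn.setOf_maximalSTPair_and_eq fun S T hST => hmax (.inr (.inr (.inr (.inr hST))))]
  refine ⟨by omega, Mnn.ncard_typeTChain h, Mnn.ncard_typeSLink h,
    (Mnn.ncard_typeS2Links h).trans (by omega), Mnn.ncard_typeSLevel h,
    Mnn.ncard_typeSLevelMinusLink h⟩

/-- Count of maximal `ST`-pairs of `M_{n,n}`: there are exactly `n² + 8n − 6`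
of them, divided among the five types as `4n − 1` T-chain pairs, `2n − 2`
S-link pairs, `n² − 2n + 1` S-2-links pairs, `2n − 2` S-level pairs, and
`2n − 2` S-level-minus-link pairs. -/
theorem count_of_maximal_ST_pairs (n : ℕ) (hn : 3 ≤ n) :
    {p : Set (Mnn n) × Set (Mnn n) | MaximalSTPair n p.1 p.2}.ncard
      = n ^ 2 + 8 * n - 6 ∧
    {p : Set (Mnn n) × Set (Mnn n) |
      MaximalSTPair n p.1 p.2 ∧ TypeTChain n (by omega) p.1 p.2}.ncard
      = 4 * n - 1 ∧
    {p : Set (Mnn n) × Set (Mnn n) |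
      MaximalSTPair n p.1 p.2 ∧ TypeSLink n (by omega) p.1 p.2}.ncard
      = 2 * n - 2 ∧
    {p : Set (Mnn n) × Set (Mnn n) |
      MaximalSTPair n p.1 p.2 ∧ TypeS2Links n (by omega) p.1 p.2}.ncard
      = n ^ 2 - 2 * n + 1 ∧
    {p : Set (Mnn n) × Set (Mnn n) |
      MaximalSTPair n p.1 p.2 ∧ TypeSLevel n (by omega) p.1 p.2}.ncard
      = 2 * n - 2 ∧
    {p : Set (Mnn n) × Set (Mnn n) |
      MaximalSTPair n p.1 p.2 ∧ TypeSLevelMinusLink n (by omega) p.1 p.2}.ncard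
      = 2 * n - 2 :=
  count_of_maximal_ST_pairs_general n (by omega)
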